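/- For every nonnegative integer n, b^2_{3,8}(2n+1) ≡ 2·b_{2,3}(n) (mod 3). -/

import Mathlib

/-- `coloredRegular k l m n` is the number of `k`-colored partitions of `n` into parts
divisible by neither `l` nor `m`, i.e. the coefficient of `q^n` in
`∏_{j ≥ 1, l ∤ j, m ∤ j} (1 - q^j)^{-k}`.  A `k`-colored partition is a multiset of
(part, color) pairs, where parts are positive integers not divisible by `l` or `m`
and colors range over `{0, …, k-1}`. -/
noncomputable def coloredRegular (k l m n : ℕ) : ℕ :=
  Nat.card {M : Multiset (ℕ × ℕ) //
    (∀ x ∈ M, ¬ l ∣ x.1 ∧ ¬ m ∣ x.1 ∧ x.2 < k) ∧ (M.map Prod.fst).sum = n}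
open PowerSeries Filter

abbrev KK := ZMod 3
instance factThree : Fact (Nat.Prime 3) := ⟨Nat.prime_three⟩

/-- X-adic limits. -/
def Lim (s : ℕ → KK⟦X⟧) (f : KK⟦X⟧) : Prop :=
  ∀ N : ℕ, ∀ᶠ M in atTop, (X : KK⟦X⟧) ^ N ∣ f - s M

lemma Lim.mul {s t : ℕ → KK⟦X⟧} {f g : KK⟦X⟧} (hs : Lim s f) (ht : Lim t g) :
    Lim (fun n => s n * t n) (f * g) := by
  intro N
  filter_upwards [hs N, ht N] with M h1 h2
  have : f * g - s M * t M = (f - s M) * g + s M * (g - t M) := by ring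
  rw [this]
  exact dvd_add (h1.mul_right _) (h2.mul_left _)

lemma Lim.const (f : KK⟦X⟧) : Lim (fun _ => f) f := by
  intro N
  simp

lemma Lim.pow {s : ℕ → KK⟦X⟧} {f : KK⟦X⟧} (hs : Lim s f) (k : ℕ) :
    Lim (fun n => s n ^ k) (f ^ k) := by
  induction k with
  | zero => simpa using Lim.const 1
  | succ k ih => simpa [pow_succ] using ih.mul hs

lemma Lim.comp {s : ℕ → KK⟦X⟧} {f : KK⟦X⟧} (hs : Lim s f) {u : ℕ → ℕ}
    (hu : ∀ n, n ≤ u n) : Lim (fun n => s (u n)) f := by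
  intro N
  have : Tendsto u atTop atTop := tendsto_atTop_mono hu tendsto_id
  exact this.eventually (hs N)

lemma eq_of_dvd {f g : KK⟦X⟧} (h : ∀ N : ℕ, (X : KK⟦X⟧) ^ N ∣ f - g) : f = g := by
  ext n
  have := (X_pow_dvd_iff.mp (h (n + 1))) n (Nat.lt_succ_self n)
  rw [map_sub, sub_eq_zero] at this
  exact this

/-- two sequences which are asymptotically equal have equal limits -/
lemma Lim.unique {s t : ℕ → KK⟦X⟧} {f g : KK⟦X⟧} (hs : Lim s f) (ht : Lim t g)
    (h : ∀ n, (X : KK⟦X⟧) ^ n ∣ s n - t n) : f = g := by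
  apply eq_of_dvd
  intro N
  obtain ⟨M, h1, h2, h3⟩ := ((hs N).and ((ht N).and (eventually_ge_atTop N))).exists
  have : f - g = (f - s M) + (s M - t M) - (g - t M) := by ring
  rw [this]
  exact dvd_sub (dvd_add h1 ((pow_dvd_pow _ h3).trans (h M))) h2

lemma Lim.unique' {s t : ℕ → KK⟦X⟧} {f g : KK⟦X⟧} (hs : Lim s f) (ht : Lim t g)
    (h : ∀ n, s n = t n) : f = g :=
  hs.unique ht (fun n => by simp [h n])

lemma Lim.coeff {s : ℕ → KK⟦X⟧} {f : KK⟦X⟧} (hs : Lim s f) (n : ℕ) :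
    ∀ᶠ M in atTop, PowerSeries.coeff n f = PowerSeries.coeff n (s M) := by
  filter_upwards [hs (n + 1)] with M h
  have := (X_pow_dvd_iff.mp h) n (Nat.lt_succ_self n)
  rwa [map_sub, sub_eq_zero] at this

lemma Lim.expand {s : ℕ → KK⟦X⟧} {f : KK⟦X⟧} (hs : Lim s f) :
    Lim (fun n => PowerSeries.expand 2 two_ne_zero (s n))
      (PowerSeries.expand 2 two_ne_zero f) := by
  intro N
  filter_upwards [hs N] with M h
  rw [← map_sub]
  have := map_dvd (PowerSeries.expand 2 two_ne_zero) h
  rw [map_pow, expand_X, ← pow_mul] at this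
  exact (pow_dvd_pow _ (by omega)).trans this

lemma exists_lim (s : ℕ → KK⟦X⟧) (h : ∀ n, (X : KK⟦X⟧) ^ n ∣ s (n + 1) - s n) :
    ∃ f, Lim s f := by
  have key : ∀ n k, (X : KK⟦X⟧) ^ n ∣ s (n + k) - s n := by
    intro n k
    induction k with
    | zero => simp
    | succ k ih =>
      have : s (n + (k + 1)) - s n = (s (n + k + 1) - s (n + k)) + (s (n + k) - s n) := by
        rw [← add_assoc]; ring
      rw [this]
      exact dvd_add ((pow_dvd_pow _ (by omega)).trans (h (n + k))) ih
  refine ⟨PowerSeries.mk fun n => PowerSeries.coeff n (s (n + 1)), fun N => ?_⟩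
  filter_upwards [eventually_ge_atTop N] with M hM
  rw [X_pow_dvd_iff]
  intro m hm
  have := (X_pow_dvd_iff.mp (key (m + 1) (M - (m + 1)))) m (Nat.lt_succ_self m)
  rw [show m + 1 + (M - (m + 1)) = M by omega, map_sub, sub_eq_zero] at this
  rw [map_sub, coeff_mk, this, sub_self]

/-- finite Euler products -/
noncomputable def FF (d n : ℕ) : KK⟦X⟧ := ∏ i ∈ Finset.range n, (1 - (X : KK⟦X⟧) ^ (d * (i + 1)))

lemma FF_succ (d n : ℕ) : FF d (n + 1) = FF d n * (1 - X ^ (d * (n + 1))) := by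
  simp [FF, Finset.prod_range_succ]

lemma FF_dvd (d n k : ℕ) : (X : KK⟦X⟧) ^ (d * (n + 1)) ∣ FF d (n + k) - FF d n := by
  induction k with
  | zero => simp
  | succ k ih =>
    have : FF d (n + (k + 1)) - FF d n =
        (FF d (n + k) - FF d n) - FF d (n + k) * X ^ (d * (n + k + 1)) := by
      rw [← add_assoc, FF_succ]; ring
    rw [this]
    refine dvd_sub ih (Dvd.dvd.mul_left (pow_dvd_pow _ ?_) _)
    exact Nat.mul_le_mul le_rfl (by omega)

lemma FF_constCoeff (d n : ℕ) (hd : 0 < d) : constantCoeff (FF d n) = 1 := by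
  rw [FF, map_prod]
  apply Finset.prod_eq_one
  intro i _
  have : d * (i + 1) ≠ 0 := by positivity
  simp [this]

lemma FF_isUnit (d n : ℕ) (hd : 0 < d) : IsUnit (FF d n) := by
  rw [PowerSeries.isUnit_iff_constantCoeff, FF_constCoeff d n hd]
  exact isUnit_one

lemma exists_euler (d : ℕ) : ∃ f, 0 < d → Lim (FF d) f := by
  by_cases hd : 0 < d
  · obtain ⟨f, hf⟩ := exists_lim (FF d) (fun n =>
      (pow_dvd_pow _ (by nlinarith)).trans (FF_dvd d n 1))
    exact ⟨f, fun _ => hf⟩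
  · exact ⟨0, fun h => absurd h hd⟩

noncomputable def ff (d : ℕ) : KK⟦X⟧ := (exists_euler d).choose

lemma ff_lim {d : ℕ} (hd : 0 < d) : Lim (FF d) (ff d) := (exists_euler d).choose_spec hd

lemma ff_constCoeff {d : ℕ} (hd : 0 < d) : constantCoeff (ff d) = 1 := by
  obtain ⟨M, hM⟩ := ((ff_lim hd).coeff 0).exists
  rw [coeff_zero_eq_constantCoeff_apply, coeff_zero_eq_constantCoeff_apply,
    FF_constCoeff d M hd] at hM
  exact hM

lemma ff_ne_zero {d : ℕ} (hd : 0 < d) : ff d ≠ 0 := by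
  intro h
  have := ff_constCoeff hd
  rw [h] at this
  simp at this

lemma expand_FF (d n : ℕ) : PowerSeries.expand 2 two_ne_zero (FF d n) = FF (2 * d) n := by
  rw [FF, FF, map_prod]
  refine Finset.prod_congr rfl fun i _ => ?_
  rw [map_sub, map_one, map_pow, expand_X, ← pow_mul, mul_assoc]

lemma expand_ff {d : ℕ} (hd : 0 < d) :
    PowerSeries.expand 2 two_ne_zero (ff d) = ff (2 * d) :=
  (ff_lim hd).expand.unique' (ff_lim (by omega)) (fun n => expand_FF d n)

lemma FF_cube (d n : ℕ) : FF d n ^ 3 = FF (3 * d) n := by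
  rw [FF, FF, ← Finset.prod_pow]
  refine Finset.prod_congr rfl fun i _ => ?_
  have : CharP KK⟦X⟧ 3 := charP_of_injective_algebraMap
    (algebraMap KK KK⟦X⟧).injective 3
  rw [sub_pow_char, one_pow, ← pow_mul]
  congr 2
  ring

lemma ff_cube {d : ℕ} (hd : 0 < d) : ff d ^ 3 = ff (3 * d) :=
  ((ff_lim hd).pow 3).unique' (ff_lim (by omega)) (fun n => FF_cube d n)

/-- Gaussian binomials -/
noncomputable def gauss (Q : KK⟦X⟧) : ℕ → ℕ → KK⟦X⟧
  | _, 0 => 1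
  | 0, _ + 1 => 0
  | n + 1, k + 1 => gauss Q n k + Q ^ (k + 1) * gauss Q n (k + 1)

lemma gauss_zero (Q : KK⟦X⟧) (n : ℕ) : gauss Q n 0 = 1 := by
  cases n <;> rfl

lemma gauss_succ (Q : KK⟦X⟧) (n k : ℕ) :
    gauss Q (n + 1) (k + 1) = gauss Q n k + Q ^ (k + 1) * gauss Q n (k + 1) := rfl

lemma gauss_eq_zero (Q : KK⟦X⟧) (n k : ℕ) (h : n < k) : gauss Q n k = 0 := by
  induction n generalizing k with
  | zero => cases k with
    | zero => omega
    | succ k => rfl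
  | succ n ih => cases k with
    | zero => omega
    | succ k => rw [gauss_succ, ih k (by omega), ih (k + 1) (by omega)]; simp

/-- product formula with `Q = X ^ d` -/
lemma gauss_mul (d a b : ℕ) :
    gauss (X ^ d) (a + b) a * FF d a * FF d b = FF d (a + b) := by
  induction h : a + b generalizing a b with
  | zero =>
    obtain ⟨rfl, rfl⟩ : a = 0 ∧ b = 0 := by omega
    simp [FF, gauss_zero]
  | succ n ih =>
    cases a with
    | zero => 
      obtain rfl : b = n + 1 := by omega
      simp [FF, gauss_zero]
    | succ a =>
      rw [gauss_succ]
      have h1 := ih a b (by omega)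
      cases b with
      | zero =>
        obtain rfl : a = n := by omega
        rw [gauss_eq_zero _ a (a + 1) (by omega), FF_succ]
        rw [show FF d 0 = 1 by simp [FF]] at h1 ⊢
        linear_combination (1 - X ^ (d * (a + 1))) * h1
      | succ b =>
        have h2 := ih (a + 1) b (by omega)
        have e : (X : KK⟦X⟧) ^ (d * (n + 1)) = X ^ (d * (a + 1)) * X ^ (d * (b + 1)) := by
          rw [← pow_add]; congr 1; rw [← mul_add]; congr 1; omega
        rw [FF_succ d n, FF_succ d a, e, ← pow_mul]
        rw [FF_succ d a] at h2
        rw [FF_succ d b] at h1 ⊢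
        linear_combination (1 - X ^ (d * (a + 1))) * h1 +
          X ^ (d * (a + 1)) * (1 - X ^ (d * (b + 1))) * h2

/-- q-binomial theorem -/
lemma gauss_binom (Q x y : KK⟦X⟧) (n : ℕ) :
    ∏ i ∈ Finset.range n, (y + x * Q ^ i) =
      ∑ k ∈ Finset.range (n + 1), gauss Q n k * Q ^ (k.choose 2) * x ^ k * y ^ (n - k) := by
  induction n generalizing x with
  | zero => simp [gauss_zero]
  | succ n ih =>
    rw [Finset.prod_range_succ']
    have h1 : ∏ i ∈ Finset.range n, (y + x * Q ^ (i + 1)) =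
        ∏ i ∈ Finset.range n, (y + (x * Q) * Q ^ i) :=
      Finset.prod_congr rfl fun i _ => by ring
    rw [h1, ih, Finset.sum_range_succ' _ (n + 1)]
    have h2 : ∀ k ∈ Finset.range (n + 1),
        gauss Q (n + 1) (k + 1) * Q ^ ((k + 1).choose 2) * x ^ (k + 1) * y ^ (n + 1 - (k + 1)) =
        (gauss Q n k * Q ^ (k.choose 2) * (x * Q) ^ k * y ^ (n - k)) * x +
        gauss Q n (k + 1) * Q ^ ((k + 1).choose 2) * (x * Q) ^ (k + 1) * y ^ (n - k) := by
      intro k _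
      rw [gauss_succ, Nat.add_sub_add_right, Nat.choose_succ_succ' k 1, Nat.choose_one_right]
      ring
    rw [Finset.sum_congr rfl h2, Finset.sum_add_distrib, ← Finset.sum_mul]
    have h3 : ∑ k ∈ Finset.range (n + 1),
        gauss Q n (k + 1) * Q ^ ((k + 1).choose 2) * (x * Q) ^ (k + 1) * y ^ (n - k)
        + y ^ (n + 1) =
        (∑ k ∈ Finset.range (n + 1),
          gauss Q n k * Q ^ (k.choose 2) * (x * Q) ^ k * y ^ (n - k)) * y := by
      rw [Finset.sum_range_succ, gauss_eq_zero Q n (n + 1) (by omega),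
        Finset.sum_range_succ' _ n, add_mul, Finset.sum_mul]
      simp only [gauss_zero]
      have : ∀ k ∈ Finset.range n, 
        gauss Q n (k + 1) * Q ^ ((k + 1).choose 2) * (x * Q) ^ (k + 1) * y ^ (n - k) =
        gauss Q n (k + 1) * Q ^ ((k + 1).choose 2) * (x * Q) ^ (k + 1) * y ^ (n - (k + 1)) * y := by
        intro k hk
        rw [Finset.mem_range] at hk
        rw [show n - k = n - (k + 1) + 1 by omega]
        ring
      rw [Finset.sum_congr rfl this]
      simp [pow_succ]
    simp only [gauss_zero]
    simp only [Nat.sub_zero, pow_zero, mul_one, Nat.choose_zero_succ, one_mul]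
    linear_combination -h3

/-- finite Jacobi triple product -/
lemma finite_jacobi (z : KK⟦X⟧) (n : ℕ) :
    (∏ i ∈ Finset.range n, (z + X ^ (2 * i + 1))) *
      (∏ i ∈ Finset.range n, (1 + z * X ^ (2 * i + 1))) =
    ∑ k ∈ Finset.range (2 * n + 1),
      gauss (X ^ 2) (2 * n) k * X ^ (((k : ℤ) - n).natAbs ^ 2) * z ^ k := by
  have h := gauss_binom (X ^ 2) (z * X) (X ^ (2 * n)) (2 * n)
  have hX : (X : KK⟦X⟧) ^ (3 * n ^ 2) ≠ 0 := pow_ne_zero _ X_ne_zero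
  apply mul_left_cancel₀ hX
  rw [Finset.mul_sum]
  have h1 : ∀ k ∈ Finset.range (2 * n + 1),
      (X : KK⟦X⟧) ^ (3 * n ^ 2) *
        (gauss (X ^ 2) (2 * n) k * X ^ (((k : ℤ) - n).natAbs ^ 2) * z ^ k) =
      gauss (X ^ 2) (2 * n) k * (X ^ 2) ^ (k.choose 2) * (z * X) ^ k *
        (X ^ (2 * n)) ^ (2 * n - k) := by
    intro k hk
    rw [Finset.mem_range] at hk
    have e : 3 * n ^ 2 + ((k : ℤ) - n).natAbs ^ 2 = 2 * k.choose 2 + k + 2 * n * (2 * n - k) := by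
      have e1 : 2 * k.choose 2 + k = k ^ 2 := by
        rw [Nat.choose_two_right, Nat.mul_div_cancel' (Nat.even_mul_pred_self k).two_dvd]
        cases k with
        | zero => rfl
        | succ k => simp; ring
      rw [e1]
      zify [show k ≤ 2 * n by omega]
      rw [sq_abs]
      ring
    have e' := congrArg (fun t => (X : KK⟦X⟧) ^ t) e
    simp only [pow_add, pow_mul] at e'
    simp only [mul_pow, ← pow_mul] at e' ⊢
    linear_combination (gauss (X ^ 2) (2 * n) k) * z ^ k * e'
  rw [Finset.sum_congr rfl h1, ← h, two_mul n, Finset.prod_range_add]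
  have h2 : ∏ i ∈ Finset.range n, ((X : KK⟦X⟧) ^ (n + n) + z * X * (X ^ 2) ^ i) =
      X ^ (n ^ 2) * ∏ i ∈ Finset.range n, (z + X ^ (2 * i + 1)) := by
    rw [← Finset.prod_range_reflect (fun i => z + (X : KK⟦X⟧) ^ (2 * i + 1))]
    have : (X : KK⟦X⟧) ^ (n ^ 2) = ∏ i ∈ Finset.range n, X ^ (2 * i + 1) := by
      rw [Finset.prod_pow_eq_pow_sum]
      congr 1
      clear h h1 hX
      induction n with
      | zero => simp
      | succ n ih => rw [Finset.sum_range_succ, ← ih]; ring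
    rw [this, ← Finset.prod_mul_distrib]
    refine Finset.prod_congr rfl fun i hi => ?_
    rw [Finset.mem_range] at hi
    have : n + n = (2 * i + 1) + (2 * (n - 1 - i) + 1) := by omega
    rw [this, pow_add]
    ring
  have h3 : ∏ i ∈ Finset.range n, ((X : KK⟦X⟧) ^ (n + n) + z * X * (X ^ 2) ^ (n + i)) =
      X ^ (2 * n ^ 2) * ∏ i ∈ Finset.range n, (1 + z * X ^ (2 * i + 1)) := by
    have : (X : KK⟦X⟧) ^ (2 * n ^ 2) = ∏ i ∈ Finset.range n, X ^ (n + n) := by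
      rw [Finset.prod_const, Finset.card_range, ← pow_mul]; congr 1; ring
    rw [this, ← Finset.prod_mul_distrib]
    refine Finset.prod_congr rfl fun i hi => ?_
    ring
  rw [h2, h3]
  ring

lemma gauss_approx (n k : ℕ) (hk : k ≤ 2 * n) :
    (X : KK⟦X⟧) ^ (2 * (n - ((k : ℤ) - n).natAbs + 1)) ∣
      FF 2 n * gauss (X ^ 2) (2 * n) k - 1 := by
  set m := n - ((k : ℤ) - n).natAbs with hm
  obtain ⟨a, ha⟩ : ∃ a, k = m + a := ⟨k - m, by omega⟩
  obtain ⟨b, hb⟩ : ∃ b, 2 * n - k = m + b := ⟨2 * n - k - m, by omega⟩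
  obtain ⟨c, hc⟩ : ∃ c, n = m + c := ⟨n - m, by omega⟩
  have h := gauss_mul 2 k (2 * n - k)
  rw [show k + (2 * n - k) = 2 * n by omega] at h
  have d1 := FF_dvd 2 m a
  have d2 := FF_dvd 2 m b
  have d3 := FF_dvd 2 m c
  have d4 := FF_dvd 2 m (m + a + b)
  rw [← ha] at d1
  rw [← hb] at d2
  rw [← hc] at d3
  rw [show m + (m + a + b) = 2 * n by omega] at d4
  have hu := FF_isUnit 2 m two_pos
  rw [← (hu.dvd_mul_left : _ ∣ FF 2 m * (FF 2 n * gauss (X ^ 2) (2 * n) k - 1) ↔ _)]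
  set g := gauss (X ^ 2 : KK⟦X⟧) (2 * n) k
  have : FF 2 m * (FF 2 n * g - 1) =
      g * FF 2 m * (FF 2 n - FF 2 m) - g * FF 2 m * (FF 2 k - FF 2 m)
      - g * FF 2 k * (FF 2 (2 * n - k) - FF 2 m) + (FF 2 (2 * n) - FF 2 m) := by
    linear_combination h
  rw [this]
  exact dvd_add (dvd_sub (dvd_sub (d3.mul_left _) (d1.mul_left _)) (d2.mul_left _)) d4

/-- partial theta sums -/
noncomputable def th (c : ℤ → KK) (e : ℤ → ℕ) (n : ℕ) : KK⟦X⟧ :=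
  ∑ j ∈ Finset.Icc (-(n : ℤ)) n, C (c j) * X ^ (e j)

lemma th_lim (c : ℤ → KK) (e : ℤ → ℕ) (he : ∀ j : ℤ, j.natAbs ≤ e j + 1) :
    ∃ f, Lim (th c e) f := by
  apply exists_lim
  intro n
  have hsub : Finset.Icc (-(n : ℤ)) n ⊆ Finset.Icc (-((n + 1 : ℕ) : ℤ)) ((n + 1 : ℕ) : ℤ) := by
    apply Finset.Icc_subset_Icc <;> push_cast <;> omega
  rw [th, th, ← Finset.sum_sdiff hsub, add_sub_cancel_right]
  apply Finset.dvd_sum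
  intro j hj
  rw [Finset.mem_sdiff, Finset.mem_Icc, Finset.mem_Icc] at hj
  have := he j
  exact Dvd.dvd.mul_left (pow_dvd_pow _ (by omega)) _

lemma sum_shift (n : ℕ) (g : ℤ → KK⟦X⟧) :
    ∑ k ∈ Finset.range (2 * n + 1), g ((k : ℤ) - n) = ∑ j ∈ Finset.Icc (-(n : ℤ)) n, g j := by
  refine Finset.sum_bij' (fun k _ => (k : ℤ) - n) (fun j _ => (j + n).toNat) ?_ ?_ ?_ ?_ ?_
  · intro a ha; rw [Finset.mem_range] at ha; rw [Finset.mem_Icc]; omega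
  · intro a ha; rw [Finset.mem_Icc] at ha; rw [Finset.mem_range]; omega
  · intro a ha; rw [Finset.mem_range] at ha; simp
  · intro a ha; rw [Finset.mem_Icc] at ha; omega
  · intro a ha; rfl

def cPhi (j : ℤ) : KK := (-1) ^ j.natAbs
def ePhi (j : ℤ) : ℕ := j.natAbs ^ 2
def eTh (j : ℤ) : ℕ := (j * (j + 1)).natAbs

lemma eTh_cast (j : ℤ) : (eTh j : ℤ) = j * (j + 1) := by
  rw [eTh, Int.natCast_natAbs, abs_of_nonneg]
  rcases le_or_gt 0 j with h | h
  · positivity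
  · nlinarith

lemma ePhi_cast (j : ℤ) : (ePhi j : ℤ) = j ^ 2 := by
  rw [ePhi]; simp

lemma ePhi_bound (j : ℤ) : j.natAbs ≤ ePhi j + 1 := by
  rw [ePhi]; nlinarith

lemma eTh_bound (j : ℤ) : j.natAbs ≤ eTh j + 1 := by
  zify
  rw [eTh_cast]
  rcases abs_cases j with h | h <;> nlinarith

noncomputable def Phi : KK⟦X⟧ := (th_lim cPhi ePhi ePhi_bound).choose
noncomputable def Theta : KK⟦X⟧ := (th_lim (fun _ => 1) eTh eTh_bound).choose
lemma Phi_lim : Lim (th cPhi ePhi) Phi := (th_lim cPhi ePhi ePhi_bound).choose_spec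
lemma Theta_lim : Lim (th (fun _ => 1) eTh) Theta :=
  (th_lim (fun _ => 1) eTh eTh_bound).choose_spec

lemma neg_one_shift (k n : ℕ) :
    (-1 : KK⟦X⟧) ^ k = (-1) ^ n * C (cPhi ((k : ℤ) - n)) := by
  rw [cPhi, map_pow, map_neg, map_one, ← pow_add]
  rw [neg_one_pow_eq_pow_mod_two, neg_one_pow_eq_pow_mod_two (n := n + _)]
  congr 1
  omega

lemma phi_approx (n : ℕ) :
    (X : KK⟦X⟧) ^ n ∣ FF 2 n * (∏ i ∈ Finset.range n, (1 - (X : KK⟦X⟧) ^ (2 * i + 1))) ^ 2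
      - th cPhi ePhi n := by
  have h := finite_jacobi (-1) n
  have h1 : ∏ i ∈ Finset.range n, ((-1 : KK⟦X⟧) + X ^ (2 * i + 1)) =
      (-1) ^ n * ∏ i ∈ Finset.range n, (1 - (X : KK⟦X⟧) ^ (2 * i + 1)) := by
    have : ((-1 : KK⟦X⟧)) ^ n = ∏ i ∈ Finset.range n, (-1) := by simp
    rw [this, ← Finset.prod_mul_distrib]
    exact Finset.prod_congr rfl fun i _ => by ring
  have h2 : ∏ i ∈ Finset.range n, (1 + (-1 : KK⟦X⟧) * X ^ (2 * i + 1)) =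
      ∏ i ∈ Finset.range n, (1 - (X : KK⟦X⟧) ^ (2 * i + 1)) :=
    Finset.prod_congr rfl fun i _ => by ring
  rw [h1, h2] at h
  have hs : ((-1 : KK⟦X⟧) ^ n) * (-1) ^ n = 1 := by rw [← mul_pow]; simp
  have h3 : FF 2 n * (∏ i ∈ Finset.range n, (1 - (X : KK⟦X⟧) ^ (2 * i + 1))) ^ 2
      - th cPhi ePhi n = ∑ k ∈ Finset.range (2 * n + 1),
        (FF 2 n * gauss (X ^ 2) (2 * n) k - 1) *
          (C (cPhi ((k : ℤ) - n)) * X ^ (ePhi ((k : ℤ) - n))) := by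
    rw [th, ← sum_shift n (fun j => C (cPhi j) * X ^ (ePhi j))]
    have h4 : (∏ i ∈ Finset.range n, (1 - (X : KK⟦X⟧) ^ (2 * i + 1))) ^ 2 =
        ∑ k ∈ Finset.range (2 * n + 1),
          gauss (X ^ 2) (2 * n) k * (C (cPhi ((k : ℤ) - n)) * X ^ (ePhi ((k : ℤ) - n))) := by
      calc _ = (-1) ^ n * ((-1) ^ n * (∏ i ∈ Finset.range n, (1 - (X : KK⟦X⟧) ^ (2 * i + 1))) *
              (∏ i ∈ Finset.range n, (1 - (X : KK⟦X⟧) ^ (2 * i + 1)))) := by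
            linear_combination (-(∏ i ∈ Finset.range n, (1 - (X : KK⟦X⟧) ^ (2 * i + 1))) ^ 2) * hs
        _ = _ := by
            rw [h, Finset.mul_sum]
            refine Finset.sum_congr rfl fun k _ => ?_
            rw [neg_one_shift k n, ePhi]
            linear_combination (gauss (X ^ 2) (2 * n) k * (C (cPhi ((k : ℤ) - n)) *
              X ^ (((k : ℤ) - n).natAbs ^ 2))) * hs
    rw [h4, Finset.mul_sum, ← Finset.sum_sub_distrib]
    exact Finset.sum_congr rfl fun i _ => by ring
  rw [h3]
  apply Finset.dvd_sum
  intro k hk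
  rw [Finset.mem_range] at hk
  have h5 := mul_dvd_mul (gauss_approx n k (by omega))
    (dvd_mul_left ((X : KK⟦X⟧) ^ (ePhi ((k : ℤ) - n))) (C (cPhi ((k : ℤ) - n))))
  rw [← pow_add] at h5
  refine (pow_dvd_pow _ ?_).trans h5
  rw [ePhi]
  generalize hj : ((k : ℤ) - n).natAbs = j
  have hj' : j ≤ n := by omega
  obtain ⟨c, rfl⟩ := Nat.exists_eq_add_of_le hj'
  rw [Nat.add_sub_cancel_left]
  nlinarith

lemma theta_approx (n : ℕ) :
    (X : KK⟦X⟧) ^ n ∣ FF 2 n * ((∏ i ∈ Finset.range n, (1 + (X : KK⟦X⟧) ^ (2 * i))) *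
      (∏ i ∈ Finset.range n, (1 + (X : KK⟦X⟧) ^ (2 * (i + 1))))) - th (fun _ => 1) eTh n := by
  have h := finite_jacobi X n
  have h1 : ∏ i ∈ Finset.range n, ((X : KK⟦X⟧) + X ^ (2 * i + 1)) =
      X ^ n * ∏ i ∈ Finset.range n, (1 + (X : KK⟦X⟧) ^ (2 * i)) := by
    have : (X : KK⟦X⟧) ^ n = ∏ i ∈ Finset.range n, X := by simp
    rw [this, ← Finset.prod_mul_distrib]
    exact Finset.prod_congr rfl fun i _ => by ring
  have h2 : ∏ i ∈ Finset.range n, (1 + (X : KK⟦X⟧) * X ^ (2 * i + 1)) =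
      ∏ i ∈ Finset.range n, (1 + (X : KK⟦X⟧) ^ (2 * (i + 1))) :=
    Finset.prod_congr rfl fun i _ => by ring
  rw [h1, h2] at h
  have h3 : FF 2 n * ((∏ i ∈ Finset.range n, (1 + (X : KK⟦X⟧) ^ (2 * i))) *
      (∏ i ∈ Finset.range n, (1 + (X : KK⟦X⟧) ^ (2 * (i + 1)))))
      - th (fun _ => 1) eTh n = ∑ k ∈ Finset.range (2 * n + 1),
        (FF 2 n * gauss (X ^ 2) (2 * n) k - 1) * X ^ (eTh ((k : ℤ) - n)) := by
    have h0 := sum_shift n (fun j => C (1 : KK) * X ^ (eTh j))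
    rw [th, ← h0]
    have h4 : ((∏ i ∈ Finset.range n, (1 + (X : KK⟦X⟧) ^ (2 * i))) *
      (∏ i ∈ Finset.range n, (1 + (X : KK⟦X⟧) ^ (2 * (i + 1))))) =
        ∑ k ∈ Finset.range (2 * n + 1),
          gauss (X ^ 2) (2 * n) k * X ^ (eTh ((k : ℤ) - n)) := by
      have hX : (X : KK⟦X⟧) ^ n ≠ 0 := pow_ne_zero _ X_ne_zero
      apply mul_left_cancel₀ hX
      rw [← mul_assoc, h, Finset.mul_sum]
      refine Finset.sum_congr rfl fun k _ => ?_
      have e : ((k : ℤ) - n).natAbs ^ 2 + k = n + eTh ((k : ℤ) - n) := by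
        zify
        rw [eTh_cast, sq_abs]
        ring
      have e' := congrArg (fun t => (X : KK⟦X⟧) ^ t) e
      simp only [pow_add] at e'
      linear_combination (gauss (X ^ 2) (2 * n) k) * e'
    rw [h4, Finset.mul_sum, ← Finset.sum_sub_distrib]
    exact Finset.sum_congr rfl fun i _ => by rw [map_one]; ring
  rw [h3]
  apply Finset.dvd_sum
  intro k hk
  rw [Finset.mem_range] at hk
  have h5 := mul_dvd_mul (gauss_approx n k (by omega))
    (dvd_refl ((X : KK⟦X⟧) ^ (eTh ((k : ℤ) - n))))
  rw [← pow_add] at h5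
  refine (pow_dvd_pow _ ?_).trans h5
  have e := eTh_cast ((k : ℤ) - n)
  generalize eTh ((k : ℤ) - n) = t at *
  generalize hj : ((k : ℤ) - n).natAbs = j
  have hj' : j ≤ n := by omega
  have e2 : j * j ≤ t + j := by
    zify
    rw [e, ← hj, Int.natCast_natAbs]
    rcases abs_cases ((k : ℤ) - n) with h | h <;> rw [h.1] <;> nlinarith
  obtain ⟨c, rfl⟩ := Nat.exists_eq_add_of_le hj'
  rw [Nat.add_sub_cancel_left]
  nlinarith

lemma odd_prod (n : ℕ) :
    (∏ i ∈ Finset.range n, (1 - (X : KK⟦X⟧) ^ (2 * i + 1))) * FF 2 n = FF 1 (2 * n) := by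
  induction n with
  | zero => simp [FF]
  | succ n ih =>
    rw [show 2 * (n + 1) = 2 * n + 1 + 1 by ring, FF_succ, FF_succ 1, FF_succ 1, ← ih,
      Finset.prod_range_succ]
    ring

lemma phi_prod : ff 1 ^ 2 = Phi * ff 2 := by
  have h1 : Lim (fun n => FF 1 (2 * n) ^ 2) (ff 1 ^ 2) :=
    ((ff_lim one_pos).comp (u := fun n => 2 * n) (fun n => by omega)).pow 2
  refine h1.unique (Phi_lim.mul (ff_lim two_pos)) fun n => ?_
  rw [← odd_prod]
  have := (phi_approx n).mul_right (FF 2 n)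
  convert this using 1
  ring

lemma plus_prod (n : ℕ) :
    (∏ i ∈ Finset.range n, (1 + (X : KK⟦X⟧) ^ (2 * (i + 1)))) * FF 2 n = FF 4 n := by
  rw [FF, FF, ← Finset.prod_mul_distrib]
  exact Finset.prod_congr rfl fun i _ => by ring

lemma plus_shift (n : ℕ) :
    (∏ i ∈ Finset.range n, (1 + (X : KK⟦X⟧) ^ (2 * i))) * (1 + X ^ (2 * n)) =
      2 * ∏ i ∈ Finset.range n, (1 + (X : KK⟦X⟧) ^ (2 * (i + 1))) := by
  rw [← Finset.prod_range_succ (fun i => 1 + (X : KK⟦X⟧) ^ (2 * i)), Finset.prod_range_succ']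
  simp only [mul_zero, pow_zero]
  ring

lemma theta_prod : 2 * ff 4 ^ 2 = Theta * ff 2 := by
  have h1 : Lim (fun n => 2 * FF 4 n ^ 2) (2 * ff 4 ^ 2) :=
    (Lim.const 2).mul ((ff_lim four_pos).pow 2)
  refine h1.unique (Theta_lim.mul (ff_lim two_pos)) fun n => ?_
  rw [← plus_prod]
  have h2 := (theta_approx n).mul_right (FF 2 n)
  have h3 := plus_shift n
  set A := ∏ i ∈ Finset.range n, (1 + (X : KK⟦X⟧) ^ (2 * i))
  set B := ∏ i ∈ Finset.range n, (1 + (X : KK⟦X⟧) ^ (2 * (i + 1)))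
  have h4 : (X : KK⟦X⟧) ^ n ∣ X ^ (2 * n) * (A * B * FF 2 n ^ 2) :=
    Dvd.dvd.mul_right (pow_dvd_pow _ (by omega)) _
  have := dvd_add h2 h4
  convert this using 1
  linear_combination (-B * FF 2 n ^ 2) * h3

lemma coeff_th_sq (c : ℤ → KK) (e : ℤ → ℕ) (N n : ℕ) :
    PowerSeries.coeff n (th c e N * th c e N) =
      ∑ p ∈ (Finset.Icc (-(N : ℤ)) N ×ˢ Finset.Icc (-(N : ℤ)) N).filter
        (fun p => e p.1 + e p.2 = n), c p.1 * c p.2 := by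
  rw [th, Finset.sum_mul_sum, ← Finset.sum_product', map_sum, Finset.sum_filter]
  refine Finset.sum_congr rfl fun p _ => ?_
  have : C (c p.1) * X ^ e p.1 * (C (c p.2) * X ^ e p.2) =
      C (c p.1 * c p.2) * (X : KK⟦X⟧) ^ (e p.1 + e p.2) := by
    rw [map_mul, pow_add]; ring
  rw [this, coeff_C_mul, coeff_X_pow]
  simp [eq_comm]

lemma natAbs_le_of_sq {a : ℤ} {n : ℕ} (h : a ^ 2 ≤ n) : -(n : ℤ) ≤ a ∧ a ≤ n := by
  constructor <;> nlinarith

lemma dissect (m : ℕ) :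
    PowerSeries.coeff (2 * m + 1)
      (Phi * Phi + X * PowerSeries.expand 2 two_ne_zero (Theta * Theta)) = 0 := by
  rw [map_add, coeff_succ_X_mul, coeff_expand_mul]
  obtain ⟨N, h1, h2, hN⟩ := (((Phi_lim.mul Phi_lim).coeff (2 * m + 1)).and
    (((Theta_lim.mul Theta_lim).coeff m).and (eventually_ge_atTop (2 * m + 1)))).exists
  rw [h1, h2, coeff_th_sq, coeff_th_sq, ← eq_neg_iff_add_eq_zero, ← Finset.sum_neg_distrib]
  refine Finset.sum_bij' (fun p _ => ((p.1 + p.2 - 1) / 2, (p.1 - p.2 - 1) / 2))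
    (fun p _ => (p.1 + p.2 + 1, p.1 - p.2)) ?_ ?_ ?_ ?_ ?_
  · rintro ⟨a, b⟩ h
    simp only [Finset.mem_filter, Finset.mem_product, Finset.mem_Icc] at h ⊢
    obtain ⟨_, h⟩ := h
    zify at h
    rw [ePhi_cast, ePhi_cast] at h
    have hodd : (a + b) % 2 = 1 := by
      have : (a ^ 2 + b ^ 2) % 2 = 1 := by omega
      rcases Int.emod_two_eq_zero_or_one a with ha | ha <;>
      rcases Int.emod_two_eq_zero_or_one b with hb | hb <;>
      simp [Int.add_emod, pow_two, Int.mul_emod, ha, hb] at this ⊢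
    obtain ⟨u, hu⟩ : ∃ u, a + b = 2 * u + 1 := ⟨(a + b) / 2, by omega⟩
    obtain ⟨v, hv⟩ : ∃ v, a - b = 2 * v + 1 := ⟨u - b, by omega⟩
    obtain rfl : a = u + v + 1 := by omega
    obtain rfl : b = u - v := by omega
    rw [show (u + v + 1 + (u - v) - 1) / 2 = u by omega,
      show (u + v + 1 - (u - v) - 1) / 2 = v by omega]
    have e1 := eTh_cast u
    have e2 := eTh_cast v
    have b1 := eTh_bound u
    have b2 := eTh_bound v
    have : eTh u + eTh v = m := by
      zify
      rw [e1, e2]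
      linarith
    omega
  · rintro ⟨u, v⟩ h
    simp only [Finset.mem_filter, Finset.mem_product, Finset.mem_Icc] at h ⊢
    obtain ⟨_, h⟩ := h
    zify at h
    rw [eTh_cast, eTh_cast] at h
    have b1 := ePhi_cast (u + v + 1)
    have b2 := ePhi_cast (u - v)
    have hs : (u + v + 1) ^ 2 + (u - v) ^ 2 = ((2 * m + 1 : ℕ) : ℤ) := by
      push_cast
      linarith
    have c1 := natAbs_le_of_sq (a := u + v + 1) (n := 2 * m + 1) (by nlinarith [sq_nonneg (u - v)])
    have c2 := natAbs_le_of_sq (a := u - v) (n := 2 * m + 1) (by nlinarith [sq_nonneg (u + v + 1)])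
    have : ePhi (u + v + 1) + ePhi (u - v) = 2 * m + 1 := by
      zify
      rw [b1, b2]
      push_cast at hs
      exact hs
    omega
  · rintro ⟨a, b⟩ h
    simp only [Finset.mem_filter, Finset.mem_product, Finset.mem_Icc] at h ⊢
    obtain ⟨_, h⟩ := h
    zify at h
    rw [ePhi_cast, ePhi_cast] at h
    have hodd : (a + b) % 2 = 1 := by
      have : (a ^ 2 + b ^ 2) % 2 = 1 := by omega
      rcases Int.emod_two_eq_zero_or_one a with ha | ha <;>
      rcases Int.emod_two_eq_zero_or_one b with hb | hb <;>
      simp [Int.add_emod, pow_two, Int.mul_emod, ha, hb] at this ⊢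
    ext <;> simp only <;> omega
  · rintro ⟨u, v⟩ h
    ext <;> simp only <;> omega
  · rintro ⟨a, b⟩ h
    simp only [Finset.mem_filter, Finset.mem_product, Finset.mem_Icc] at h ⊢
    obtain ⟨_, h⟩ := h
    rw [ePhi, ePhi] at h
    have hodd : Odd (a.natAbs + b.natAbs) := by
      have : Odd (a.natAbs ^ 2 + b.natAbs ^ 2) := ⟨m, h⟩
      simpa [Nat.odd_add, Nat.odd_pow_iff, Nat.even_pow] using this
    rw [cPhi, cPhi, ← pow_add, hodd.neg_one_pow]
    simp

/-- multisets supported on `S` with total weight `n` -/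
def WW (S : Finset (ℕ × ℕ)) (n : ℕ) : Set (Multiset (ℕ × ℕ)) :=
  {M | (∀ x ∈ M, x ∈ S) ∧ (M.map Prod.fst).sum = n}

lemma card_le_sum (M : Multiset (ℕ × ℕ)) (h : ∀ x ∈ M, 0 < x.1) :
    Multiset.card M ≤ (M.map Prod.fst).sum := by
  induction M using Multiset.induction_on with
  | empty => simp
  | cons a M ih =>
    have h1 := ih fun x hx => h x (Multiset.mem_cons_of_mem hx)
    have h2 := h a (Multiset.mem_cons_self a M)
    simp only [Multiset.card_cons, Multiset.map_cons, Multiset.sum_cons]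
    omega

lemma WW_finite (S : Finset (ℕ × ℕ)) (hS : ∀ x ∈ S, 0 < x.1) (n : ℕ) : (WW S n).Finite := by
  apply (Set.finite_Iic (n • S.val)).subset
  rintro M ⟨h1, h2⟩
  rw [Set.mem_Iic, Multiset.le_iff_count]
  intro x
  by_cases hx : x ∈ M
  · have h3 := card_le_sum M fun y hy => hS y (h1 y hy)
    have h4 := Multiset.count_le_card x M
    have h5 : Multiset.count x S.val = 1 := Multiset.count_eq_one_of_mem S.nodup (h1 x hx)
    rw [Multiset.count_nsmul, h5]
    omega
  · rw [Multiset.count_eq_zero_of_notMem hx]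
    exact Nat.zero_le _

lemma WW_insert_lt (a : ℕ × ℕ) (S : Finset (ℕ × ℕ)) (n : ℕ) (h : n < a.1) :
    WW (insert a S) n = WW S n := by
  ext M
  constructor
  · rintro ⟨h1, h2⟩
    refine ⟨fun x hx => ?_, h2⟩
    rcases Finset.mem_insert.mp (h1 x hx) with rfl | h3
    · have := Multiset.single_le_sum (s := M.map Prod.fst) (by simp) x.1
        (Multiset.mem_map_of_mem _ hx)
      omega
    · exact h3
  · rintro ⟨h1, h2⟩
    exact ⟨fun x hx => Finset.mem_insert_of_mem (h1 x hx), h2⟩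

lemma WW_insert_ge (a : ℕ × ℕ) (S : Finset (ℕ × ℕ)) (n : ℕ) :
    WW (insert a S) (n + a.1) =
      WW S (n + a.1) ∪ Set.image (fun M => a ::ₘ M) (WW (insert a S) n) := by
  ext M
  constructor
  · rintro ⟨h1, h2⟩
    by_cases ha : a ∈ M
    · right
      obtain ⟨M', rfl⟩ := Multiset.exists_cons_of_mem ha
      refine ⟨M', ⟨fun x hx => h1 x (Multiset.mem_cons_of_mem hx), ?_⟩, rfl⟩
      simp only [Multiset.map_cons, Multiset.sum_cons] at h2
      omega
    · left
      refine ⟨fun x hx => ?_, h2⟩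
      rcases Finset.mem_insert.mp (h1 x hx) with rfl | h3
      · exact absurd hx ha
      · exact h3
  · rintro (⟨h1, h2⟩ | ⟨M', ⟨h1, h2⟩, rfl⟩)
    · exact ⟨fun x hx => Finset.mem_insert_of_mem (h1 x hx), h2⟩
    · refine ⟨fun x hx => ?_, ?_⟩
      · rcases Multiset.mem_cons.mp hx with rfl | h3
        · exact Finset.mem_insert_self _ _
        · exact h1 x h3
      · simp only [Multiset.map_cons, Multiset.sum_cons]
        omega

noncomputable def GG (S : Finset (ℕ × ℕ)) : KK⟦X⟧ :=
  PowerSeries.mk fun n => ((WW S n).ncard : KK)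

lemma GG_insert (a : ℕ × ℕ) (S : Finset (ℕ × ℕ)) (ha : a ∉ S) (hS : ∀ x ∈ insert a S, 0 < x.1) :
    GG (insert a S) * (1 - X ^ a.1) = GG S := by
  ext n
  rw [mul_sub, mul_one, map_sub, coeff_mul_X_pow', GG, GG, coeff_mk]
  split_ifs with h
  · obtain ⟨m, rfl⟩ := Nat.exists_eq_add_of_le' h
    have hd : Disjoint (WW S (m + a.1)) (Set.image (fun M => a ::ₘ M) (WW (insert a S) m)) := by
      rw [Set.disjoint_left]
      rintro M ⟨h1, h2⟩ ⟨M', _, rfl⟩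
      exact ha (h1 a (Multiset.mem_cons_self a M'))
    have hi : Function.Injective (fun M : Multiset (ℕ × ℕ) => a ::ₘ M) := fun x y hxy =>
      (Multiset.cons_inj_right a).mp hxy
    rw [Nat.add_sub_cancel, coeff_mk, coeff_mk, WW_insert_ge, Set.ncard_union_eq hd
      (WW_finite S (fun x hx => hS x (Finset.mem_insert_of_mem hx)) _)
      ((WW_finite _ hS _).image _), Set.ncard_image_of_injective _ hi]
    push_cast
    ring
  · rw [coeff_mk, WW_insert_lt a S n (by omega), sub_zero]

lemma GG_mul (S : Finset (ℕ × ℕ)) (hS : ∀ x ∈ S, 0 < x.1) :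
    GG S * ∏ x ∈ S, (1 - (X : KK⟦X⟧) ^ x.1) = 1 := by
  induction S using Finset.induction_on with
  | empty =>
    rw [Finset.prod_empty, mul_one]
    ext n
    rw [GG, coeff_mk, coeff_one]
    have : WW ∅ n = if n = 0 then {0} else ∅ := by
      ext M
      constructor
      · rintro ⟨h1, h2⟩
        obtain rfl : M = 0 := Multiset.eq_zero_of_forall_notMem fun x hx => by simpa using h1 x hx
        simp at h2
        simp [← h2]
      · split_ifs with h
        · rintro rfl
          exact ⟨by simp, by simp [h]⟩
        · simp
    rw [this]
    split_ifs <;> simp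
  | insert a S ha ih =>
    rw [Finset.prod_insert ha, ← mul_assoc, GG_insert a S ha hS]
    exact ih fun x hx => hS x (Finset.mem_insert_of_mem hx)

/-- allowed part sizes up to `M` -/
def parts (l m M : ℕ) : Finset ℕ := (Finset.Icc 1 M).filter fun j => ¬ l ∣ j ∧ ¬ m ∣ j

noncomputable def BB (k l m : ℕ) : KK⟦X⟧ := PowerSeries.mk fun n => (coloredRegular k l m n : KK)

lemma BB_lim (k l m : ℕ) : Lim (fun M => GG (parts l m M ×ˢ Finset.range k)) (BB k l m) := by
  intro N
  filter_upwards [eventually_ge_atTop N] with M hM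
  rw [X_pow_dvd_iff]
  intro n hn
  rw [map_sub, sub_eq_zero, BB, GG, coeff_mk, coeff_mk, coloredRegular]
  congr 1
  rw [← Nat.card_coe_set_eq]
  apply Nat.card_congr
  refine Equiv.subtypeEquivRight fun s => ?_
  change _ ↔ _ ∧ _
  constructor
  · rintro ⟨h1, h2⟩
    refine ⟨fun x hx => ?_, h2⟩
    obtain ⟨h3, h4, h5⟩ := h1 x hx
    have := Multiset.single_le_sum (s := s.map Prod.fst) (by simp) x.1
        (Multiset.mem_map_of_mem _ hx)
    have h0 : x.1 ≠ 0 := by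
      intro h; rw [h] at h3; exact h3 (dvd_zero l)
    simp only [parts, Finset.mem_product, Finset.mem_filter, Finset.mem_Icc, Finset.mem_range]
    exact ⟨⟨by omega, h3, h4⟩, h5⟩
  · rintro ⟨h1, h2⟩
    refine ⟨fun x hx => ?_, h2⟩
    have := h1 x hx
    simp only [parts, Finset.mem_product, Finset.mem_filter, Finset.mem_Icc,
      Finset.mem_range] at this
    exact ⟨this.1.2.1, this.1.2.2, this.2⟩

lemma GG_parts (k l m M : ℕ) :
    GG (parts l m M ×ˢ Finset.range k) * (∏ j ∈ parts l m M, (1 - (X : KK⟦X⟧) ^ j)) ^ k = 1 := by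
  have h := GG_mul (parts l m M ×ˢ Finset.range k) (by
    intro x hx
    simp only [parts, Finset.mem_product, Finset.mem_filter, Finset.mem_Icc] at hx
    omega)
  rw [Finset.prod_product] at h
  simp only [Finset.prod_const, Finset.card_range] at h
  rw [Finset.prod_pow] at h
  exact h

lemma prod_dvd (d n : ℕ) (hd : 0 < d) :
    ∏ j ∈ (Finset.Icc 1 (d * n)).filter (fun j => d ∣ j), (1 - (X : KK⟦X⟧) ^ j) = FF d n := by
  rw [FF]
  symm
  refine Finset.prod_bij (fun i _ => d * (i + 1)) ?_ ?_ ?_ ?_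
  · intro i hi
    rw [Finset.mem_range] at hi
    rw [Finset.mem_filter, Finset.mem_Icc]
    exact ⟨⟨by nlinarith, Nat.mul_le_mul le_rfl hi⟩, dvd_mul_right _ _⟩
  · intro i _ j _ h
    have := Nat.eq_of_mul_eq_mul_left hd h
    omega
  · intro j hj
    rw [Finset.mem_filter, Finset.mem_Icc] at hj
    obtain ⟨⟨h1, h2⟩, c, rfl⟩ := hj
    have h3 := Nat.le_of_mul_le_mul_left h2 hd
    have h4 : c ≠ 0 := by rintro rfl; simp at h1
    exact ⟨c - 1, by rw [Finset.mem_range]; omega, by rw [Nat.sub_add_cancel (by omega)]⟩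
  · intro i _; rfl

lemma incl_excl (l m n : ℕ) (hl : 0 < l) (hm : 0 < m) (hc : Nat.Coprime l m) :
    (∏ j ∈ parts l m (l * m * n), (1 - (X : KK⟦X⟧) ^ j)) * (FF l (m * n) * FF m (l * n)) =
      FF 1 (l * m * n) * FF (l * m) n := by
  rw [← prod_dvd l _ hl, ← prod_dvd m _ hm, ← prod_dvd 1 _ one_pos,
    ← prod_dvd (l * m) _ (Nat.mul_pos hl hm), ← mul_assoc l, ← mul_assoc m, mul_comm m l, one_mul,
    parts]
  simp only [Finset.prod_filter, ← Finset.prod_mul_distrib]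
  refine Finset.prod_congr rfl fun j _ => ?_
  have h : l * m ∣ j ↔ l ∣ j ∧ m ∣ j := 
    ⟨fun h => ⟨(dvd_mul_right l m).trans h, (dvd_mul_left m l).trans h⟩,
      fun h => hc.mul_dvd_of_dvd_of_dvd h.1 h.2⟩
  by_cases h1 : l ∣ j <;> by_cases h2 : m ∣ j <;> simp [h1, h2, h]

lemma BB_eq (k l m : ℕ) (hl : 0 < l) (hm : 0 < m) (hc : Nat.Coprime l m) :
    BB k l m * (ff 1 * ff (l * m)) ^ k = (ff l * ff m) ^ k := by
  have hlm := Nat.mul_pos hl hm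
  have a1 := (BB_lim k l m).comp (u := fun n => l * m * n) (fun n => by nlinarith)
  have a2 := (ff_lim one_pos).comp (u := fun n => l * m * n) (fun n => by nlinarith)
  have a3 := (ff_lim hl).comp (u := fun n => m * n) (fun n => by nlinarith)
  have a4 := (ff_lim hm).comp (u := fun n => l * n) (fun n => by nlinarith)
  refine (a1.mul ((a2.mul (ff_lim hlm)).pow k)).unique' ((a3.mul a4).pow k) fun n => ?_
  rw [← incl_excl l m n hl hm hc, mul_pow, ← mul_assoc, GG_parts, one_mul]

lemma BB38 : BB 2 3 8 * ff 8 ^ 4 = ff 1 ^ 4 := by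
  have h := BB_eq 2 3 8 (by norm_num) (by norm_num) (by norm_num)
  have h3 := ff_cube (d := 1) one_pos
  have h24 := ff_cube (d := 8) (by norm_num)
  norm_num at h h3 h24
  rw [← h3, ← h24] at h
  have n1 : ff 1 ^ 2 * ff 8 ^ 2 ≠ 0 :=
    mul_ne_zero (pow_ne_zero _ (ff_ne_zero one_pos)) (pow_ne_zero _ (ff_ne_zero (by norm_num)))
  apply mul_right_cancel₀ n1
  linear_combination h

lemma BB23 : BB 1 2 3 * ff 2 ^ 2 = ff 1 ^ 2 := by
  have h := BB_eq 1 2 3 (by norm_num) (by norm_num) (by norm_num)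
  have h3 := ff_cube (d := 1) one_pos
  have h6 := ff_cube (d := 2) (by norm_num)
  norm_num at h h3 h6
  rw [← h3, ← h6] at h
  have n1 : ff 1 * ff 2 ≠ 0 :=
    mul_ne_zero (ff_ne_zero one_pos) (ff_ne_zero (by norm_num))
  apply mul_right_cancel₀ n1
  linear_combination h

lemma main_series (n : ℕ) : PowerSeries.coeff (2 * n + 1)
    (BB 2 3 8 + 4 * (X * PowerSeries.expand 2 two_ne_zero (BB 1 2 3))) = 0 := by
  set E := PowerSeries.expand (R := KK) 2 two_ne_zero with hE
  set V := Phi * Phi + X * E (Theta * Theta) with hV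
  have hVe : V = E (PowerSeries.mk fun n => PowerSeries.coeff (2 * n) V) := by
    ext k
    rcases Nat.even_or_odd' k with ⟨m, rfl | rfl⟩
    · rw [hE, coeff_expand_mul, coeff_mk]
    · rw [hE, coeff_expand_of_not_dvd _ _ _ (by omega), hV]
      exact dissect m
  have f12 : E (ff 1) = ff 2 := expand_ff one_pos
  have f24 : E (ff 2) = ff 4 := expand_ff two_pos
  have f48 : E (ff 4) = ff 8 := expand_ff four_pos
  have t := congrArg E theta_prod
  have c := congrArg E BB23
  simp only [map_mul, map_pow, f12, f24, f48, map_ofNat] at t c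
  have key : (BB 2 3 8 + 4 * (X * E (BB 1 2 3))) * (ff 8 ^ 4 * ff 4 ^ 2) =
      ff 2 ^ 2 * ff 4 ^ 2 * V := by
    rw [hV, map_mul]
    have b := BB38
    have p := phi_prod
    linear_combination ff 4 ^ 2 * b + 4 * X * ff 8 ^ 4 * c + 
      ff 4 ^ 2 * (ff 1 ^ 2 + Phi * ff 2) * p +
      X * ff 2 ^ 2 * (2 * ff 8 ^ 2 + E Theta * ff 4) * t
  set U := ff 4 ^ 4 * ff 2 ^ 2 with hU
  have hUc : constantCoeff U ≠ 0 := by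
    rw [hU, map_mul, map_pow, map_pow, ff_constCoeff four_pos, ff_constCoeff two_pos]
    simp
  have hUE : E U = ff 8 ^ 4 * ff 4 ^ 2 := by
    rw [hU, map_mul, map_pow, map_pow, f48, f24]
  have hinv : E U * E U⁻¹ = 1 := by
    rw [← map_mul, PowerSeries.mul_inv_cancel _ hUc, map_one]
  have : BB 2 3 8 + 4 * (X * E (BB 1 2 3)) =
      E (ff 1 ^ 2 * ff 2 ^ 2 * (PowerSeries.mk fun n => PowerSeries.coeff (2 * n) V) * U⁻¹) := by
    rw [map_mul, map_mul, ← hVe, map_mul, map_pow, map_pow, f12, f24, ← key, ← hUE, mul_assoc, hinv,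
      mul_one]
  rw [this, hE, coeff_expand_of_not_dvd _ _ _ (by omega)]

theorem stmt_5 (n : ℕ) :
    coloredRegular 2 3 8 (2 * n + 1) ≡ 2 * coloredRegular 1 2 3 n [MOD 3] := by
  have h := main_series n
  rw [map_add, show (4 : KK⟦X⟧) = C (4 : KK) from (map_ofNat C 4).symm, coeff_C_mul, coeff_succ_X_mul,
    coeff_expand_mul, BB, BB, coeff_mk, coeff_mk] at h
  rw [← ZMod.natCast_eq_natCast_iff]
  push_cast
  have h6 : (6 : ZMod 3) = 0 := by decide
  linear_combination h - (coloredRegular 1 2 3 n : ZMod 3) * h6
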